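/- arXiv:2507.04653 — 2 statements merged into one kernel-verified Lean document; each statement's English description precedes it below -/
import Mathlib

section
/- For all positive integers α, m, n, r, the polynomial ∑_{k=1}^{n} k^r·(k+1)^r·(2k+1)·w_k^{(α)}(x)^m in ℤ[x] has all its coefficients divisible by n(n+1)(n+2)/gcd(2,n). -/
open Polynomial

/-- `w(k,j) = C(k-1,j-1)·C(k+j,j) − C(k,j)·C(k+j,j-1)`. -/
def w (k j : ℕ) : ℤ :=
  ((k - 1).choose (j - 1) * (k + j).choose j : ℤ) - (k.choose j * (k + j).choose (j - 1) : ℤ)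

/-- `w_k^{(α)}(x) = ∑_{j=1}^{k} w(k,j)^α x^{j-1}` in `ℤ[x]`. -/
noncomputable def wPoly (α k : ℕ) : Polynomial ℤ :=
  ∑ j ∈ Finset.Icc 1 k, Polynomial.C ((w k j) ^ α) * X ^ (j - 1)

/-- The closed form `(k + 1) · w(k, j) = C(k-1, j-1) · C(k+j, j)`, at `k = K + 1`, `j = s + 1`. -/
lemma mul_w_succ_succ (K s : ℕ) :
    ((K : ℤ) + 2) * w (K + 1) (s + 1) = K.choose s * (K + s + 2).choose (s + 1) := by
  have h1 : ((K : ℤ) + 1) * K.choose s = (K + 1).choose (s + 1) * (s + 1) := by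
    exact_mod_cast Nat.add_one_mul_choose_eq K s
  have h2 : ((K + s + 2).choose (s + 1) : ℤ) * (s + 1) = (K + s + 2).choose s * (K + 2) := by
    have := Nat.choose_succ_right_eq (K + s + 2) s
    rw [show K + s + 2 - s = K + 2 by omega] at this
    exact_mod_cast this
  have h3 : ((s : ℤ) + 1) ≠ 0 := by positivity
  rw [w, show K + 1 + (s + 1) = K + s + 2 by omega]
  simp only [Nat.add_sub_cancel]
  apply mul_left_cancel₀ h3
  linear_combination ((K + s + 2).choose (s + 1) : ℤ) * (s + 1) * h1 + ((K + 1).choose (s + 1) : ℤ) * (s + 1) * h2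

/-- `C(n, s+1) (s+1) = C(n, s) (n - s)` over `ℤ`, with no condition on `n` and `s`. -/
lemma cast_choose_succ_right (n s : ℕ) :
    (n.choose (s + 1) : ℤ) * (s + 1) = n.choose s * (n - s) := by
  rcases le_or_gt s n with h | h
  · have := Nat.choose_succ_right_eq n s
    zify [h] at this
    exact this
  · simp [Nat.choose_eq_zero_of_lt h, Nat.choose_eq_zero_of_lt (Nat.lt_succ_of_lt h)]

/-- The function `k ↦ w(k, s+1)`, re-indexed to start at `k = 1`. -/
def wFun (s K : ℕ) : ℤ := w (K + 1) (s + 1)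

lemma wFun_zero : wFun 0 = 1 := by
  ext K
  have h := mul_w_succ_succ K 0
  have h0 : ((K : ℤ) + 2) ≠ 0 := by positivity
  apply mul_left_cancel₀ h0
  simp [wFun, h]

lemma wFun_succ (s K : ℕ) :
    ((s : ℤ) + 1) * (s + 2) * wFun (s + 1) K =
      ((K + 1) * (K + 2) - (s + 1) * (s + 2)) * wFun s K := by
  have h0 : ((K : ℤ) + 2) ≠ 0 := by positivity
  have h1 := mul_w_succ_succ K s
  have h2 := mul_w_succ_succ K (s + 1)
  have h3 := cast_choose_succ_right K s
  have h4 : ((K + s + 2 : ℤ) + 1) * (K + s + 2).choose (s + 1)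
      = (K + s + 3).choose (s + 2) * (s + 2) := by
    exact_mod_cast Nat.add_one_mul_choose_eq (K + s + 2) (s + 1)
  rw [show K + (s + 1) + 2 = K + s + 3 by omega] at h2
  simp only [wFun]
  apply mul_left_cancel₀ h0
  linear_combination ((s : ℤ) + 1) * (s + 2) * h2
    - ((K + 1 : ℤ) * (K + 2) - (s + 1) * (s + 2)) * h1
    + ((K + s + 3).choose (s + 2) : ℤ) * (s + 2) * h3 - (K.choose s : ℤ) * (K - s) * h4


lemma choose_mul_choose_eq (d e t : ℕ) :
    (e + d + 1) * (e + d + t + 2).choose (e + d + 1) * (e + d).choose e =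
      (t + e + 2) * (e + d + t + 2).choose d * (t + e + 1).choose (t + 1) := by
  have h1 := Nat.cast_add_choose ℚ (a := e + d + 1) (b := t + 1)
  have h2 := Nat.cast_add_choose ℚ (a := e) (b := d)
  have h3 := Nat.cast_add_choose ℚ (a := d) (b := t + e + 2)
  have h4 := Nat.cast_add_choose ℚ (a := t + 1) (b := e)
  rw [show e + d + 1 + (t + 1) = e + d + t + 2 by omega] at h1
  rw [show d + (t + e + 2) = e + d + t + 2 by omega] at h3
  rw [show t + 1 + e = t + e + 1 by omega] at h4
  rw [← Nat.cast_inj (R := ℚ)]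
  push_cast
  rw [h1, h2, h3, h4, Nat.factorial_succ (e + d), Nat.factorial_succ (t + e + 1)]
  have f1 := Nat.factorial_ne_zero (e + d)
  have f2 := Nat.factorial_ne_zero (t + e + 1)
  have f3 := Nat.factorial_ne_zero (t + 1)
  have f4 := Nat.factorial_ne_zero e
  have f5 := Nat.factorial_ne_zero d
  have f6 : (e + d + 1 : ℚ) ≠ 0 := by positivity
  have f7 : (t + e + 2 : ℚ) ≠ 0 := by positivity
  push_cast
  rw [show (t + e + 1 + 1 : ℚ) = t + e + 2 by ring]
  field_simp

lemma add_two_dvd_choose_mul (s t e : ℕ) :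
    t + e + 2 ∣ (s + t + 2).choose (s + 1) * (t + e).choose s * s.choose e := by
  rcases lt_or_ge s e with h | h
  · simp [Nat.choose_eq_zero_of_lt h]
  obtain ⟨d, rfl⟩ := Nat.exists_eq_add_of_le h
  have hcop : Nat.Coprime (t + e + 2) (t + e + 1) := by
    simp [show t + e + 2 = (t + e + 1) + 1 by omega]
  refine hcop.dvd_of_dvd_mul_left
    ⟨(e + d + t + 2).choose d * (t + e + 1).choose (t + 1) * (t + e + 1).choose (e + d + 1), ?_⟩
  have h1 := Nat.add_one_mul_choose_eq (t + e) (e + d)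
  have h2 := choose_mul_choose_eq d e t
  zify at h1 h2 ⊢
  linear_combination ((e + d + t + 2).choose (e + d + 1) : ℤ) * (e + d).choose e * h1
    + ((t + e + 1).choose (e + d + 1) : ℤ) * h2

/-- The coefficient of `wFun (t + e)` in the expansion of `wFun s * wFun t`. -/
def structCoeff (s t e : ℕ) : ℕ :=
  (s + t + 2).choose (s + 1) * (t + e).choose s * s.choose e / (t + e + 2)

lemma structCoeff_mul (s t e : ℕ) :
    ((t : ℤ) + e + 2) * structCoeff s t e =
      (s + t + 2).choose (s + 1) * (t + e).choose s * s.choose e := by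
  exact_mod_cast Nat.mul_div_cancel' (add_two_dvd_choose_mul s t e)

lemma structCoeff_eq_zero {s t e : ℕ} (h : s < e) : structCoeff s t e = 0 := by
  simp [structCoeff, Nat.choose_eq_zero_of_lt h]

lemma choose_succ_succ_central (s t : ℕ) :
    ((s + 1 + t + 2).choose (s + 1 + 1) : ℤ) * (s + 2) =
      (s + t + 3) * (s + t + 2).choose (s + 1) := by
  have := Nat.add_one_mul_choose_eq (s + t + 2) (s + 1)
  rw [show s + 1 + t + 2 = s + t + 2 + 1 by omega]
  zify at this
  linear_combination -this

lemma structCoeff_succ_zero (s t : ℕ) :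
    ((s : ℤ) + 1) * (s + 2) * structCoeff (s + 1) t 0 =
      ((t + 1) * (t + 2) - (s + 1) * (s + 2)) * structCoeff s t 0 := by
  have h0 : ((t : ℤ) + 2) ≠ 0 := by positivity
  have h1 := structCoeff_mul s t 0
  have h2 := structCoeff_mul (s + 1) t 0
  have h3 := cast_choose_succ_right t s
  have h4 := choose_succ_succ_central s t
  simp only [Nat.choose_zero_right, Nat.cast_zero, Nat.cast_one, add_zero, mul_one] at h1 h2
  apply mul_left_cancel₀ h0
  linear_combination ((s : ℤ) + 1) * (s + 2) * h2
    - ((t + 1 : ℤ) * (t + 2) - (s + 1) * (s + 2)) * h1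
    + ((s : ℤ) + 1) * t.choose (s + 1) * h4
    + ((s : ℤ) + t + 3) * (s + t + 2).choose (s + 1) * h3

lemma structCoeff_succ_succ (s t e : ℕ) :
    ((s : ℤ) + 1) * (s + 2) * structCoeff (s + 1) t (e + 1) =
      ((t + e + 2) * (t + e + 3) - (s + 1) * (s + 2)) * structCoeff s t (e + 1)
        + (t + e + 1) * (t + e + 2) * structCoeff s t e := by
  have h0 : ((t : ℤ) + e + 3) ≠ 0 := by positivity
  have h1 := structCoeff_mul s t e
  have h2 := structCoeff_mul s t (e + 1)
  have h3 := structCoeff_mul (s + 1) t (e + 1)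
  have h4 := choose_succ_succ_central s t
  have h5 := cast_choose_succ_right (t + e + 1) s
  have h6 : ((t + e + 1 : ℤ)) * (t + e).choose s = (t + e + 1).choose s * (t + e + 1 - s) := by
    have := Nat.add_one_mul_choose_eq (t + e) s
    zify at this
    rw [this, h5]
    push_cast
    ring
  have h7 := cast_choose_succ_right s e
  rw [← add_assoc t e 1] at h2 h3
  rw [Nat.choose_succ_succ' s e] at h3
  push_cast at h1 h2 h3 h5
  apply mul_left_cancel₀ h0
  set A : ℤ := ((s + t + 2).choose (s + 1) : ℤ)
  set B : ℤ := ((t + e + 1).choose s : ℤ)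
  set p : ℤ := (s.choose e : ℤ)
  set q : ℤ := (s.choose (e + 1) : ℤ)
  linear_combination ((s : ℤ) + 1) * (s + 2) * h3
    - ((t + e + 2 : ℤ) * (t + e + 3) - (s + 1) * (s + 2)) * h2
    - ((t : ℤ) + e + 3) * (t + e + 1) * h1
    + ((s : ℤ) + 1) * (t + e + 1).choose (s + 1) * (p + q) * h4
    + ((s : ℤ) + t + 3) * A * (p + q) * h5
    - ((t : ℤ) + e + 3) * A * p * h6
    - A * B * (t + e + 1 - s) * h7

lemma wFun_mul_wFun (s t K : ℕ) :
    wFun s K * wFun t K =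
      ∑ e ∈ Finset.range (s + 1), (structCoeff s t e : ℤ) * wFun (t + e) K := by
  induction s with
  | zero =>
    have h := structCoeff_mul 0 t 0
    have h0 : ((t : ℤ) + 2) ≠ 0 := by positivity
    have : (structCoeff 0 t 0 : ℤ) = 1 := by
      apply mul_left_cancel₀ h0
      simpa using h
    simp [wFun_zero, this]
  | succ s ih =>
    have h0 : ((s : ℤ) + 1) * (s + 2) ≠ 0 := by positivity
    apply mul_left_cancel₀ h0
    have hext : ∑ e ∈ Finset.range (s + 1),
          (((t : ℤ) + e + 1) * (t + e + 2) - (s + 1) * (s + 2)) *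
            structCoeff s t e * wFun (t + e) K =
        ∑ e ∈ Finset.range (s + 2),
          (((t : ℤ) + e + 1) * (t + e + 2) - (s + 1) * (s + 2)) *
            structCoeff s t e * wFun (t + e) K := by
      rw [Finset.sum_range_succ _ (s + 1), structCoeff_eq_zero (Nat.lt_succ_self s)]
      simp
    calc ((s : ℤ) + 1) * (s + 2) * (wFun (s + 1) K * wFun t K)
        = ((K + 1) * (K + 2) - (s + 1) * (s + 2)) * (wFun s K * wFun t K) := by
          rw [← mul_assoc, wFun_succ, mul_assoc]
      _ = ∑ e ∈ Finset.range (s + 1),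
            (((t : ℤ) + e + 1) * (t + e + 2) - (s + 1) * (s + 2)) *
              structCoeff s t e * wFun (t + e) K
          + ∑ e ∈ Finset.range (s + 1),
            ((t : ℤ) + e + 1) * (t + e + 2) * structCoeff s t e * wFun (t + e + 1) K := by
          rw [ih, Finset.mul_sum, ← Finset.sum_add_distrib]
          refine Finset.sum_congr rfl fun e _ => ?_
          have := wFun_succ (t + e) K
          push_cast at this
          linear_combination -(structCoeff s t e : ℤ) * this
      _ = _ := by
          rw [hext, Finset.sum_range_succ' _ (s + 1), Finset.sum_range_succ' _ (s + 1),
            mul_add _ (Finset.sum _ _), add_right_comm, ← Finset.sum_add_distrib, Finset.mul_sum]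
          congr 1
          · refine Finset.sum_congr rfl fun e _ => ?_
            have := structCoeff_succ_succ s t e
            rw [← add_assoc t e 1]
            push_cast
            linear_combination -wFun (t + e + 1) K * this
          · have := structCoeff_succ_zero s t
            push_cast
            simp only [add_zero]
            linear_combination -wFun t K * this

/-- The integer span of the functions `wFun s`, which is closed under multiplication. -/
def wAlgebra : Subalgebra ℤ (ℕ → ℤ) :=
  (Submodule.span ℤ (Set.range wFun)).toSubalgebra
    (wFun_zero ▸ Submodule.subset_span ⟨0, rfl⟩) <| by
    intro f g hf hg
    induction hf, hg using Submodule.span_induction₂ with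
    | mem_mem f g hf hg =>
      obtain ⟨s, rfl⟩ := hf
      obtain ⟨t, rfl⟩ := hg
      have : wFun s * wFun t =
          ∑ e ∈ Finset.range (s + 1), (structCoeff s t e : ℤ) • wFun (t + e) := by
        ext K
        simp [wFun_mul_wFun, Finset.sum_apply]
      rw [this]
      exact Submodule.sum_mem _ fun e _ =>
        Submodule.smul_mem _ _ (Submodule.subset_span ⟨t + e, rfl⟩)
    | zero_left g hg => simp
    | zero_right f hf => simp
    | add_left f f' g _ _ _ h h' => rw [add_mul]; exact add_mem h h'
    | add_right f g g' _ _ _ h h' => rw [mul_add]; exact add_mem h h'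
    | smul_left c f g _ _ h => rw [smul_mul_assoc]; exact Submodule.smul_mem _ _ h
    | smul_right c f g _ _ h => rw [mul_smul_comm]; exact Submodule.smul_mem _ _ h

lemma wFun_mem_wAlgebra (s : ℕ) : wFun s ∈ wAlgebra :=
  Submodule.subset_span ⟨s, rfl⟩

lemma consecutive_mul_mem_wAlgebra : (fun K : ℕ => ((K : ℤ) + 1) * (K + 2)) ∈ wAlgebra := by
  have : (fun K : ℕ => ((K : ℤ) + 1) * (K + 2)) = (2 : ℤ) • wFun 0 + (2 : ℤ) • wFun 1 := by
    ext K
    have h := wFun_succ 0 K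
    simp only [wFun_zero, zero_add, Pi.one_apply, mul_one, Nat.cast_zero] at h
    simp only [wFun_zero, Pi.add_apply, Pi.smul_apply, Pi.one_apply, smul_eq_mul]
    linear_combination -h
  rw [this]
  exact add_mem (Subalgebra.smul_mem _ (wFun_mem_wAlgebra 0) _)
    (Subalgebra.smul_mem _ (wFun_mem_wAlgebra 1) _)

lemma coeff_wPoly {α : ℕ} (hα : 1 ≤ α) (K i : ℕ) :
    (wPoly α (K + 1)).coeff i = wFun i K ^ α := by
  rw [wPoly, finsetSum_coeff]
  simp only [coeff_C_mul, coeff_X_pow, mul_ite, mul_one, mul_zero]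
  rcases le_or_gt i K with h | h
  · rw [Finset.sum_eq_single (i + 1)]
    · simp [wFun]
    · intro j hj hne
      rw [Finset.mem_Icc] at hj
      rw [if_neg (by omega)]
    · intro hni
      exact absurd (Finset.mem_Icc.2 ⟨by omega, by omega⟩) hni
  · have hz : wFun i K = 0 := by
      simp [wFun, w, Nat.choose_eq_zero_of_lt h, Nat.choose_eq_zero_of_lt (Nat.succ_lt_succ h)]
    rw [hz, zero_pow (by omega)]
    refine Finset.sum_eq_zero fun j hj => ?_
    rw [Finset.mem_Icc] at hj
    rw [if_neg (by omega)]

lemma coeff_wPoly_pow_mem {α : ℕ} (hα : 1 ≤ α) (m i : ℕ) :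
    (fun K => (wPoly α (K + 1) ^ m).coeff i) ∈ wAlgebra := by
  induction m generalizing i with
  | zero =>
    have : (fun K => (wPoly α (K + 1) ^ 0).coeff i) = (if i = 0 then (1 : ℤ) else 0) • 1 := by
      ext K
      simp [coeff_one]
    rw [this]
    exact Subalgebra.smul_mem _ (one_mem _) _
  | succ m ih =>
    have : (fun K => (wPoly α (K + 1) ^ (m + 1)).coeff i) =
        ∑ p ∈ Finset.HasAntidiagonal.antidiagonal i,
          (fun K => (wPoly α (K + 1) ^ m).coeff p.1) * wFun p.2 ^ α := by
      ext K
      simp [pow_succ, coeff_mul, coeff_wPoly hα, Finset.sum_apply]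
    rw [this]
    exact sum_mem fun p _ => mul_mem (ih p.1) (pow_mem (wFun_mem_wAlgebra p.2) α)

lemma sum_mul_wFun (s n : ℕ) :
    ∑ K ∈ Finset.range n, ((K : ℤ) + 1) * (K + 2) * (2 * K + 3) * wFun s K =
      (s + 1) * (n + 1) * n.choose (s + 1) * (n + s + 2).choose (s + 2) := by
  induction n with
  | zero => simp
  | succ n ih =>
    rw [Finset.sum_range_succ, ih]
    have h0 : ((s : ℤ) + 2) ≠ 0 := by positivity
    have h1 := mul_w_succ_succ n s
    have h2 := Nat.add_one_mul_choose_eq n s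
    have h3 := Nat.add_one_mul_choose_eq (n + s + 2) (s + 1)
    have h4 := cast_choose_succ_right n s
    have h5 := cast_choose_succ_right (n + s + 2) (s + 1)
    rw [show n + 1 + s + 2 = n + s + 2 + 1 by omega]
    zify at h2 h3
    push_cast at h5 ⊢
    simp only [wFun]
    apply mul_left_cancel₀ h0
    set P : ℤ := (n.choose s : ℤ)
    set Q : ℤ := ((n + s + 2).choose (s + 1) : ℤ)
    set R : ℤ := ((n + s + 2).choose (s + 2) : ℤ)
    set T : ℤ := ((n + s + 2 + 1).choose (s + 2) : ℤ)
    linear_combination ((s : ℤ) + 2) * (n + 1) * (2 * n + 3) * h1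
      + ((s : ℤ) + 2) * (n + 1) * R * h4 + ((n : ℤ) + 1) * P * (n - s) * h5
      + (n + 2 : ℤ) * (n + 1) * P * h3 + (n + 2 : ℤ) * (s + 2) * T * h2

lemma dvd_mul_choose_mul_choose (n s : ℕ) :
    (n + 1) * (n + 2) * (n + 3) / Nat.gcd 2 (n + 1) ∣
      (s + 1) * (n + 2) * (n + 1).choose (s + 1) * (n + 1 + s + 2).choose (s + 2) := by
  set T := n.choose s * (n + s + 3).choose (s + 2) with hT
  have hg : Nat.gcd (n + 3) (n + 1) = Nat.gcd 2 (n + 1) := by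
    rw [show n + 3 = 2 + (n + 1) by omega, Nat.gcd_add_self_left]
  have hgd : Nat.gcd 2 (n + 1) ∣ n + 3 := hg ▸ Nat.gcd_dvd_left _ _
  have h1 : n + 3 ∣ (n + 1) * T := by
    refine ⟨(n + 2).choose (s + 2) * (n + s + 3).choose s, ?_⟩
    have e1 := Nat.add_one_mul_choose_eq n s
    have e2 := Nat.add_one_mul_choose_eq (n + 1) (s + 1)
    have e3 := Nat.choose_succ_right_eq (n + s + 3) s
    have e4 := Nat.choose_succ_right_eq (n + s + 3) (s + 1)
    rw [show n + s + 3 - s = n + 3 by omega] at e3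
    rw [show n + s + 3 - (s + 1) = n + 2 by omega] at e4
    apply Nat.eq_of_mul_eq_mul_left (show 0 < s + 2 by omega)
    rw [hT]
    simp only [add_assoc, Nat.reduceAdd] at e1 e2 e3 e4 ⊢
    zify at e1 e2 e3 e4 ⊢
    linear_combination ((s : ℤ) + 2) * (n + (s + 3)).choose (s + 2) * e1
      + ((n + 1).choose (s + 1) : ℤ) * (s + 1) * e4
      + ((n + 1).choose (s + 1) : ℤ) * (n + 2) * e3
      + ((n + 3 : ℤ)) * (n + (s + 3)).choose s * e2
  have h2 : (n + 3) / Nat.gcd 2 (n + 1) ∣ T := by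
    rw [← hg]
    have hpos : 0 < Nat.gcd (n + 3) (n + 1) := Nat.gcd_pos_of_pos_left _ (by omega)
    refine (Nat.coprime_div_gcd_div_gcd hpos).dvd_of_dvd_mul_left ?_
    rw [Nat.div_mul_right_comm (Nat.gcd_dvd_right _ _)]
    exact Nat.div_dvd_div (Nat.gcd_dvd_left _ _) h1
  have h3 : (s + 1) * (n + 2) * (n + 1).choose (s + 1) * (n + 1 + s + 2).choose (s + 2) =
      (n + 1) * (n + 2) * T := by
    rw [show n + 1 + s + 2 = n + s + 3 by omega, hT]
    have e1 := Nat.add_one_mul_choose_eq n s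
    zify at e1 ⊢
    linear_combination -(n + 2 : ℤ) * (n + s + 3).choose (s + 2) * e1
  rw [h3, Nat.mul_div_assoc _ hgd]
  exact mul_dvd_mul_left _ h2

lemma dvd_sum_of_mem_wAlgebra (n : ℕ) {f : ℕ → ℤ} (hf : f ∈ wAlgebra) :
    (((n + 1) * (n + 2) * (n + 3) / Nat.gcd 2 (n + 1) : ℕ) : ℤ) ∣
      ∑ K ∈ Finset.range (n + 1), ((K : ℤ) + 1) * (K + 2) * (2 * K + 3) * f K := by
  replace hf : f ∈ Submodule.span ℤ (Set.range wFun) := hf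
  induction hf using Submodule.span_induction with
  | mem f hf =>
    obtain ⟨s, rfl⟩ := hf
    rw [sum_mul_wFun]
    have := Int.natCast_dvd_natCast.2 (dvd_mul_choose_mul_choose n s)
    convert this using 1
    push_cast
    ring
  | zero => simp
  | add f g _ _ hf hg =>
    simp only [Pi.add_apply, mul_add _ (f _) (g _), Finset.sum_add_distrib]
    exact dvd_add hf hg
  | smul c f _ hf =>
    simp only [Pi.smul_apply, smul_eq_mul, mul_left_comm _ c, ← Finset.mul_sum]
    exact hf.mul_left c

/-- For all positive integers `α, m, n, r`, every coefficient of
`∑_{k=1}^{n} k^r (k+1)^r (2k+1) w_k^{(α)}(x)^m` is divisible by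
`n(n+1)(n+2)/gcd(2,n)`. -/
theorem coeff_dvd_sum (α m n r : ℕ) (hα : 1 ≤ α) (hm : 1 ≤ m) (hn : 1 ≤ n) (hr : 1 ≤ r) :
    ∀ i : ℕ, ((n * (n + 1) * (n + 2) / Nat.gcd 2 n : ℕ) : ℤ) ∣
      (∑ k ∈ Finset.Icc 1 n,
          ((k : ℤ) ^ r * ((k : ℤ) + 1) ^ r * (2 * (k : ℤ) + 1)) • (wPoly α k) ^ m).coeff i := by
  intro i
  obtain ⟨n, rfl⟩ := Nat.exists_eq_add_of_le' hn
  obtain ⟨r, rfl⟩ := Nat.exists_eq_add_of_le' hr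
  have h := dvd_sum_of_mem_wAlgebra n
    (mul_mem (pow_mem consecutive_mul_mem_wAlgebra r) (coeff_wPoly_pow_mem hα m i))
  convert h using 1
  rw [finsetSum_coeff, ← Finset.Ico_add_one_right_eq_Icc, Finset.sum_Ico_eq_sum_range]
  refine Finset.sum_congr rfl fun K _ => ?_
  rw [add_comm 1 K, coeff_smul]
  simp only [Pi.mul_apply, Pi.pow_apply, smul_eq_mul]
  push_cast
  rw [mul_pow]
  ring
end

section
/- For all positive integers α, m, n, r, the polynomial n(n+1)(n+2)/gcd(2,n) divides 2·∑_{k=1}^{n} k(k+1)(k+2)·(w_k^{(α)}(x)·w_{k+1}^{(α)}(x))^m in ℤ[x], i.e., 2(2,n)/(n(n+1)(n+2)) times this sum lies in ℤ[x]. -/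
open Polynomial

section QBinomial

variable {R S : Type*} [CommRing R] [CommRing S]

/-- The `q`-integer `[n] = 1 + q + ⋯ + q^(n-1)`. -/
def qInt (q : R) (n : ℕ) : R := ∑ i ∈ Finset.range n, q ^ i

/-- The `q`-binomial coefficient, defined by the `q`-Pascal recursion. -/
def qChoose (q : R) : ℕ → ℕ → R
  | _, 0 => 1
  | 0, _ + 1 => 0
  | n + 1, k + 1 => qChoose q n k + q ^ (k + 1) * qChoose q n (k + 1)

@[simp] lemma qChoose_zero_right (q : R) (n : ℕ) : qChoose q n 0 = 1 := by
  cases n <;> rfl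

@[simp] lemma qChoose_zero_succ (q : R) (k : ℕ) : qChoose q 0 (k + 1) = 0 := rfl

lemma qChoose_succ_succ (q : R) (n k : ℕ) :
    qChoose q (n + 1) (k + 1) = qChoose q n k + q ^ (k + 1) * qChoose q n (k + 1) := rfl

lemma qInt_add (q : R) (m n : ℕ) : qInt q (m + n) = qInt q m + q ^ m * qInt q n := by
  simp [qInt, Finset.sum_range_add, Finset.mul_sum, pow_add]

@[simp] lemma qInt_zero (q : R) : qInt q 0 = 0 := by simp [qInt]

@[simp] lemma qInt_one_right (q : R) : qInt q 1 = 1 := by simp [qInt]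

lemma qInt_mul_sub_one (q : R) (n : ℕ) : qInt q n * (q - 1) = q ^ n - 1 :=
  geom_sum_mul q n

@[simp] lemma qInt_one_left (n : ℕ) : qInt (1 : R) n = n := by simp [qInt]

lemma map_qInt (f : R →+* S) (q : R) (n : ℕ) : f (qInt q n) = qInt (f q) n := by
  simp [qInt]

lemma map_qChoose (f : R →+* S) (q : R) (n k : ℕ) :
    f (qChoose q n k) = qChoose (f q) n k := by
  induction n generalizing k with
  | zero => cases k <;> simp
  | succ n ih => cases k <;> simp [qChoose_succ_succ, ih]

lemma qChoose_one (n k : ℕ) : qChoose (1 : R) n k = n.choose k := by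
  induction n generalizing k with
  | zero => cases k <;> simp
  | succ n ih => cases k <;> simp [qChoose_succ_succ, ih, Nat.choose_succ_succ]

lemma qChoose_eq_zero_of_lt (q : R) {n k : ℕ} (h : n < k) : qChoose q n k = 0 := by
  induction n generalizing k with
  | zero => obtain ⟨k, rfl⟩ := Nat.exists_eq_succ_of_ne_zero h.ne'; rfl
  | succ n ih =>
    obtain ⟨k, rfl⟩ := Nat.exists_eq_succ_of_ne_zero (Nat.ne_zero_of_lt h)
    rw [Nat.succ_eq_add_one, qChoose_succ_succ, ih (by omega), ih (by omega)]
    ring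

@[simp] lemma qChoose_self (q : R) (n : ℕ) : qChoose q n n = 1 := by
  induction n with
  | zero => simp
  | succ n ih => simp [qChoose_succ_succ, ih, qChoose_eq_zero_of_lt]

lemma qInt_succ_add_mul_qChoose (q : R) (n k : ℕ) :
    (qInt q (k + 1) + q ^ (k + 1) * qInt q (n - k)) * qChoose q n k =
      qInt q (n + 1) * qChoose q n k := by
  rcases le_or_gt k n with h | h
  · rw [← qInt_add, show k + 1 + (n - k) = n + 1 by omega]
  · simp [qChoose_eq_zero_of_lt q h]

lemma qInt_mul_qChoose_succ_right (q : R) (n k : ℕ) :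
    qInt q (k + 1) * qChoose q n (k + 1) = qInt q (n - k) * qChoose q n k := by
  induction n generalizing k with
  | zero => simp
  | succ n ih =>
    cases k with
    | zero =>
      have h := ih 0
      have h2 := qInt_add q 1 n
      rw [add_comm 1 n] at h2
      simp only [zero_add, qInt_one_right, one_mul, Nat.sub_zero, qChoose_zero_right, mul_one,
        pow_one, qChoose_succ_succ] at h h2 ⊢
      rw [h, h2]
    | succ k =>
      have h1 := qInt_succ_add_mul_qChoose q n (k + 1)
      have hle : (qInt q (k + 1) + q ^ (k + 1) * qInt q (n - k)) * qChoose q n (k + 1) =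
          qInt q (n + 1) * qChoose q n (k + 1) := by
        rcases le_or_gt k n with h | h
        · rw [← qInt_add, show k + 1 + (n - k) = n + 1 by omega]
        · simp [qChoose_eq_zero_of_lt q (show n < k + 1 by omega)]
      rw [qChoose_succ_succ, qChoose_succ_succ, Nat.add_sub_add_right]
      linear_combination h1 - hle + q ^ (k + 2) * ih (k + 1) + ih k

lemma qInt_mul_qChoose_succ_succ (q : R) (n k : ℕ) :
    qInt q (k + 1) * qChoose q (n + 1) (k + 1) = qInt q (n + 1) * qChoose q n k := by
  rw [qChoose_succ_succ]
  linear_combination q ^ (k + 1) * qInt_mul_qChoose_succ_right q n k +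
    qInt_succ_add_mul_qChoose q n k

end QBinomial

section RootOfUnity

variable {K : Type*} [Field K] {ζ : K} {d : ℕ}

lemma IsPrimitiveRoot.qInt_ne_zero (h : IsPrimitiveRoot ζ d) {n : ℕ} (hn : ¬ d ∣ n) :
    qInt ζ n ≠ 0 := by
  intro h0
  have := qInt_mul_sub_one ζ n
  rw [h0, zero_mul] at this
  exact hn (h.dvd_of_pow_eq_one n (sub_eq_zero.mp this.symm))

lemma IsPrimitiveRoot.qInt_eq_zero (h : IsPrimitiveRoot ζ d) (hd : 1 < d) {n : ℕ} (hn : d ∣ n) :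
    qInt ζ n = 0 := by
  have h1 := qInt_mul_sub_one ζ n
  rw [(h.pow_eq_one_iff_dvd n).mpr hn, sub_self] at h1
  exact (mul_eq_zero.mp h1).resolve_right (sub_ne_zero.mpr (h.ne_one hd))

/-- The `q`-Lucas theorem. -/
lemma IsPrimitiveRoot.qChoose_lucas (h : IsPrimitiveRoot ζ d) (hd : 1 < d) (a : ℕ) {b : ℕ}
    (hb : b < d) (c : ℕ) {e : ℕ} (he : e < d) :
    qChoose ζ (d * a + b) (d * c + e) = a.choose c * qChoose ζ b e := by
  have step (a b : ℕ) (ih : ∀ c e, e < d →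
      qChoose ζ (d * a + b) (d * c + e) = a.choose c * qChoose ζ b e) (c e : ℕ) (he : e + 1 < d) :
      qChoose ζ (d * a + b + 1) (d * c + (e + 1)) = a.choose c * qChoose ζ (b + 1) (e + 1) := by
    rw [← add_assoc, qChoose_succ_succ, add_assoc (d * c), ih c e (by omega), ih c (e + 1) he,
      qChoose_succ_succ, pow_add, pow_mul, h.pow_eq_one, one_pow]
    ring
  have step0 (a b : ℕ) (ih : ∀ c e, e < d →
      qChoose ζ (d * a + b) (d * c + e) = a.choose c * qChoose ζ b e) (c : ℕ) :
      qChoose ζ (d * a + b + 1) (d * (c + 1)) =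
        a.choose c * qChoose ζ b (d - 1) + a.choose (c + 1) := by
    have h1 := ih c (d - 1) (by omega)
    have h2 := ih (c + 1) 0 (by omega)
    have h3 : d * (c + 1) = d * c + (d - 1) + 1 := by rw [mul_add]; omega
    rw [add_zero, qChoose_zero_right, mul_one] at h2
    nth_rw 1 [h3]
    rw [qChoose_succ_succ, ← h3, h1, h2, pow_mul, h.pow_eq_one, one_pow, one_mul]
  have inner (a : ℕ) (h0 : ∀ c e, e < d →
      qChoose ζ (d * a) (d * c + e) = a.choose c * qChoose ζ 0 e) (b : ℕ) (hb : b < d) :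
      ∀ c e, e < d → qChoose ζ (d * a + b) (d * c + e) = a.choose c * qChoose ζ b e := by
    induction b with
    | zero => exact h0
    | succ b ih =>
      intro c e he
      specialize ih (by omega)
      rcases e with _ | e
      · rcases c with _ | c
        · simp
        · rw [add_zero, ← add_assoc, step0 a b ih c, qChoose_eq_zero_of_lt ζ (by omega)]
          simp
      · exact step a b ih c e he
  refine inner a ?_ b hb c e he
  clear hb he c e b
  induction a with
  | zero =>
    intro c e he
    rcases e with _ | e
    · rcases c with _ | c
      · simp
      · obtain ⟨t, ht⟩ := Nat.exists_eq_succ_of_ne_zero (show d * (c + 1) ≠ 0 by positivity)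
        simp [ht]
    · simp [← add_assoc]
  | succ a iha =>
    intro c e he
    have ih := inner a iha (d - 1) (by omega)
    have h1 : d * (a + 1) = d * a + (d - 1) + 1 := by rw [mul_add]; omega
    rcases e with _ | e
    · rcases c with _ | c
      · simp
      · rw [h1, add_zero, step0 _ _ ih]
        simp [Nat.choose_succ_succ]
    · rw [h1, step _ _ ih c e he]
      have h2 := qInt_mul_qChoose_succ_succ ζ (d - 1) e
      rw [show d - 1 + 1 = d by omega, h.qInt_eq_zero hd dvd_rfl, zero_mul] at h2
      have h3 := (mul_eq_zero.mp h2).resolve_left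
        (h.qInt_ne_zero (Nat.not_dvd_of_pos_of_lt (by omega) he))
      simp [h3, show d - 1 + 1 = d by omega]

/-- Reflection `u ↦ -1 - u` of the upper index of a `q`-binomial coefficient. -/
lemma IsPrimitiveRoot.qChoose_reflect (h : IsPrimitiveRoot ζ d) {u v : ℕ} (huv : u + v + 1 = d)
    {m : ℕ} (hm : m ≤ u) :
    ζ ^ (v * m + (m + 1).choose 2) * qChoose ζ u m = (-1) ^ m * qChoose ζ (v + m) m := by
  induction m with
  | zero => simp
  | succ m ih =>
    specialize ih (by omega)
    have hne : qInt ζ (m + 1) ≠ 0 :=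
      h.qInt_ne_zero (Nat.not_dvd_of_pos_of_lt (by omega) (by omega))
    have h1 := qInt_mul_qChoose_succ_right ζ u m
    have h2 := qInt_mul_qChoose_succ_succ ζ (v + m) m
    have hd : 1 < d := by omega
    have h3 := qInt_add ζ (v + m + 1) (u - m)
    rw [show v + m + 1 + (u - m) = d by omega, h.qInt_eq_zero hd dvd_rfl] at h3
    apply mul_left_cancel₀ hne
    have h4 : v * (m + 1) + (m + 1 + 1).choose 2 =
        (v * m + (m + 1).choose 2) + (v + m + 1) := by
      rw [Nat.choose_succ_succ' (m + 1) 1, Nat.choose_one_right]; ring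
    rw [h4, pow_add, ← add_assoc v m 1]
    linear_combination ζ ^ (v * m + (m + 1).choose 2) * ζ ^ (v + m + 1) * h1 +
      (-1) ^ m * h2 + ζ ^ (v + m + 1) * qInt ζ (u - m) * ih
      - (-1) ^ m * qChoose ζ (v + m) m * h3

end RootOfUnity

section QAnalogue

variable {R S : Type*} [CommRing R] [CommRing S]

/-- A `q`-analogue of `w k j`, normalised by the power `q ^ ((N - k) * (j - 1))` so that it becomes
symmetric under reflection of `k` at roots of unity whose order divides `N`. -/
def qW (q : R) (N k j : ℕ) : R :=
  q ^ ((N - k) * (j - 1)) * (qChoose q (k - 1) (j - 1) * qChoose q (k + j) j -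
    q * (qChoose q k j * qChoose q (k + j) (j - 1)))

/-- The `q`-analogue of `wPoly α k`. -/
noncomputable def qWPoly (q : R) (N α k : ℕ) : R[X] :=
  ∑ j ∈ Finset.Icc 1 N, C (qW q N k j ^ α) * X ^ (j - 1)

/-- The `q`-analogue of `2 * (k * (k + 1) * (k + 2))`. -/
def qWeight (q : R) (N k : ℕ) : R :=
  q ^ (2 * (N - k)) * (qInt q k * qInt q (2 * k + 2) * qInt q (k + 2))

/-- The `q`-analogue of twice the sum of `k (k + 1) (k + 2) (w_k w_{k+1})^m` over `k < N`. -/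
noncomputable def qWSum (q : R) (N α m : ℕ) : R[X] :=
  ∑ k ∈ Finset.range N, C (qWeight q N k) * (qWPoly q N α k * qWPoly q N α (k + 1)) ^ m

lemma map_qWeight (f : R →+* S) (q : R) (N k : ℕ) :
    f (qWeight q N k) = qWeight (f q) N k := by
  simp [qWeight, map_qInt]

lemma map_qW (f : R →+* S) (q : R) (N k j : ℕ) : f (qW q N k j) = qW (f q) N k j := by
  simp [qW, map_qChoose]

lemma map_qWPoly (f : R →+* S) (q : R) (N α k : ℕ) :
    (qWPoly q N α k).map f = qWPoly (f q) N α k := by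
  simp only [qWPoly, Polynomial.map_sum, Polynomial.map_mul, Polynomial.map_pow, map_C, map_X,
    map_pow]
  simp only [map_qW]

lemma map_qWSum (f : R →+* S) (q : R) (N α m : ℕ) :
    (qWSum q N α m).map f = qWSum (f q) N α m := by
  simp only [qWSum, Polynomial.map_sum, Polynomial.map_mul, Polynomial.map_pow, map_C, map_qWPoly]
  simp only [map_qWeight]

lemma qWPoly_one {α N k : ℕ} (hα : 1 ≤ α) (hk : 1 ≤ k) (hkN : k ≤ N) :
    qWPoly (1 : ℤ) N α k = wPoly α k := by
  have hw (j : ℕ) : qW (1 : ℤ) N k j = w k j := by simp [qW, w, qChoose_one]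
  simp only [qWPoly, wPoly, hw]
  refine (Finset.sum_subset (Finset.Icc_subset_Icc_right hkN) fun j hj hj' => ?_).symm
  rw [Finset.mem_Icc] at hj hj'
  have : w k j = 0 := by
    simp [w, Nat.choose_eq_zero_of_lt (show k < j by omega),
      Nat.choose_eq_zero_of_lt (show k - 1 < j - 1 by omega)]
  simp [this, show α ≠ 0 by omega]

lemma qInt_mul_qW (q : R) (N k j : ℕ) :
    qInt q (j + 1) * qW q N (k + 1) (j + 1) =
      q ^ ((N - (k + 1)) * j) * (qChoose q k j * qChoose q (k + j + 2) j) := by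
  have h1 := qInt_mul_qChoose_succ_right q (k + j + 2) j
  have h2 := qInt_mul_qChoose_succ_succ q k j
  have h3 := qInt_add q 1 (k + 1)
  rw [show k + j + 2 - j = 1 + (k + 1) by omega] at h1
  simp only [qInt_one_right, pow_one] at h3
  rw [qW, Nat.add_sub_cancel, Nat.add_sub_cancel, show k + 1 + (j + 1) = k + j + 2 by ring]
  rw [h3] at h1
  linear_combination q ^ ((N - (k + 1)) * j) * (qChoose q k j * h1 -
    q * qChoose q (k + j + 2) j * h2)

end QAnalogue

section Reflection

variable {K : Type*} [Field K] {ζ : K} {d : ℕ}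

lemma IsPrimitiveRoot.qW_mul_eq_zero (h : IsPrimitiveRoot ζ d) (N a c : ℕ) {b : ℕ} (hb : 1 ≤ b)
    (hbd : b + 2 ≤ d) : qW ζ N (d * a + b) (d * (c + 1)) = 0 := by
  have hd : 1 < d := by omega
  have h1 : d * (c + 1) - 1 = d * c + (d - 1) := by rw [mul_add]; omega
  have h2 : d * a + b + d * (c + 1) = d * (a + c + 1) + b := by ring
  rw [qW, h1, h2, show d * a + b - 1 = d * a + (b - 1) by omega,
    h.qChoose_lucas hd a (by omega) c (by omega),
    h.qChoose_lucas hd (a + c + 1) (b := b) (by omega) c (by omega),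
    qChoose_eq_zero_of_lt ζ (show b - 1 < d - 1 by omega),
    qChoose_eq_zero_of_lt ζ (show b < d - 1 by omega)]
  ring

lemma IsPrimitiveRoot.qInt_mul_qW (h : IsPrimitiveRoot ζ d) (N a c : ℕ) {b m : ℕ} (hb : 1 ≤ b)
    (hbd : b + 2 ≤ d) (hm : m + 1 < d) :
    qInt ζ (d * c + m + 1) * qW ζ N (d * a + b) (d * c + m + 1) =
      if m < b ∧ b + m + 1 < d then ζ ^ ((N - (d * a + b)) * m) *
        (a.choose c * (a + c).choose c * (qChoose ζ (b - 1) m * qChoose ζ (b + 1 + m) m))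
      else 0 := by
  have hd : 1 < d := by omega
  obtain ⟨b, rfl⟩ := Nat.exists_eq_add_of_le' hb
  have hpow : ζ ^ ((N - (d * a + b + 1)) * (d * c + m)) = ζ ^ ((N - (d * a + b + 1)) * m) := by
    rw [mul_add, pow_add, show (N - (d * a + b + 1)) * (d * c) =
      d * ((N - (d * a + b + 1)) * c) by ring, pow_mul ζ d, h.pow_eq_one, one_pow, one_mul]
  rw [← add_assoc, _root_.qInt_mul_qW, hpow, h.qChoose_lucas hd a (by omega) c (by omega)]
  split_ifs with hc
  · rw [show d * a + b + (d * c + m) + 2 = d * (a + c) + (b + 1 + 1 + m) by ring,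
      h.qChoose_lucas hd _ (by omega) c (by omega), Nat.add_sub_cancel]
    ring
  · rw [not_and_or] at hc
    by_cases hmb : m < b + 1
    · have : d * a + b + (d * c + m) + 2 = d * (a + c + 1) + (b + m + 2 - d) := by
        rw [mul_add, mul_add]; omega
      rw [this, h.qChoose_lucas hd _ (by omega) c (by omega),
        qChoose_eq_zero_of_lt ζ (show b + m + 2 - d < m by omega)]
      ring
    · rw [qChoose_eq_zero_of_lt ζ (show b < m by omega)]
      ring

lemma IsPrimitiveRoot.qW_reflect (h : IsPrimitiveRoot ζ d) {N a b b' j : ℕ} (hb : 1 ≤ b)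
    (hb' : 1 ≤ b') (hbb : b + b' + 1 = d) (hN : d * a + d ≤ N) (hj : 1 ≤ j) :
    qW ζ N (d * a + b) j = qW ζ N (d * a + b') j := by
  have hd : 1 < d := by omega
  have hj' := Nat.div_add_mod j d
  have hlt := Nat.mod_lt j (show 0 < d by omega)
  generalize j / d = c at hj'
  generalize j % d = e at hj' hlt
  subst hj'
  rcases e with _ | m
  · rcases c with _ | c
    · simp at hj
    · rw [add_zero, h.qW_mul_eq_zero N a c hb (by omega), h.qW_mul_eq_zero N a c hb' (by omega)]
  have hne : qInt ζ (d * c + m + 1) ≠ 0 := by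
    apply h.qInt_ne_zero
    rw [add_assoc, Nat.dvd_add_right (dvd_mul_right d c)]
    exact Nat.not_dvd_of_pos_of_lt (by omega) hlt
  apply mul_left_cancel₀ hne
  rw [← add_assoc, h.qInt_mul_qW N a c hb (by omega) hlt, h.qInt_mul_qW N a c hb' (by omega) hlt]
  by_cases hc : m < b ∧ m < b'
  · rw [if_pos (by omega), if_pos (by omega)]
    have r1 := h.qChoose_reflect (u := b' - 1) (v := b + 1) (m := m) (by omega) (by omega)
    have r2 := h.qChoose_reflect (u := b - 1) (v := b' + 1) (m := m) (by omega) (by omega)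
    have e1 : ζ ^ ((N - (d * a + b)) * m) * ζ ^ ((b + 1) * m + (m + 1).choose 2) =
        ζ ^ ((N - (d * a + b')) * m) * ζ ^ ((b' + 1) * m + (m + 1).choose 2) := by
      rw [← pow_add, ← pow_add, ← add_assoc, ← add_assoc, ← add_mul, ← add_mul]
      congr 3
      omega
    have hs : ((-1 : K) ^ m) ≠ 0 := pow_ne_zero _ (by simp)
    apply mul_left_cancel₀ hs
    linear_combination (a.choose c * (a + c).choose c : K) *
      (ζ ^ ((N - (d * a + b')) * m) * qChoose ζ (b' - 1) m * r2
        - ζ ^ ((N - (d * a + b)) * m) * qChoose ζ (b - 1) m * r1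
        + qChoose ζ (b - 1) m * qChoose ζ (b' - 1) m * e1)
  · rw [if_neg (by omega), if_neg (by omega)]

lemma IsPrimitiveRoot.qWPoly_reflect (h : IsPrimitiveRoot ζ d) {N a b b' : ℕ} (α : ℕ) (hb : 1 ≤ b)
    (hb' : 1 ≤ b') (hbb : b + b' + 1 = d) (hN : d * a + d ≤ N) :
    qWPoly ζ N α (d * a + b) = qWPoly ζ N α (d * a + b') :=
  Finset.sum_congr rfl fun j hj => by
    rw [h.qW_reflect hb hb' hbb hN (Finset.mem_Icc.mp hj).1]

lemma qWeight_reflect (hζ : ζ ≠ 1) {N k k' : ℕ} (hN : ζ ^ N = 1) (hk : k ≤ N) (hk' : k' ≤ N)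
    (hkk : ζ ^ (k + k' + 2) = 1) : qWeight ζ N k' = -qWeight ζ N k := by
  have hy {k : ℕ} (hk : k ≤ N) : ζ ^ (N - k) * ζ ^ k = 1 := by
    rw [← pow_add, Nat.sub_add_cancel hk, hN]
  have h1 := hy hk
  have h2 := hy hk'
  rw [pow_add, pow_add] at hkk
  have hz : ζ ^ k ≠ 0 := right_ne_zero_of_mul_eq_one h1
  have hz' : ζ ^ k' ≠ 0 := right_ne_zero_of_mul_eq_one h2
  have hy1 : ζ ^ (N - k) = ζ ^ k' * ζ ^ 2 := mul_right_cancel₀ hz (by linear_combination h1 - hkk)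
  have hy2 : ζ ^ (N - k') = ζ ^ k * ζ ^ 2 := mul_right_cancel₀ hz' (by linear_combination h2 - hkk)
  have key (k : ℕ) : qWeight ζ N k * (ζ - 1) ^ 3 = (ζ ^ (N - k)) ^ 2 *
      ((ζ ^ k - 1) * ((ζ ^ k) ^ 2 * ζ ^ 2 - 1) * (ζ ^ k * ζ ^ 2 - 1)) := by
    have i1 := qInt_mul_sub_one ζ k
    have i2 := qInt_mul_sub_one ζ (2 * k + 2)
    have i3 := qInt_mul_sub_one ζ (k + 2)
    rw [pow_add, mul_comm 2 k, pow_mul] at i2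
    rw [pow_add] at i3
    rw [← i1, ← i2, ← i3, qWeight, mul_comm 2 (N - k), pow_mul, mul_comm k 2]
    ring
  apply mul_right_cancel₀ (pow_ne_zero 3 (sub_ne_zero.mpr hζ))
  rw [neg_mul, key, key, hy1, hy2]
  generalize ζ ^ k = z at *
  generalize ζ ^ k' = z' at *
  generalize ζ ^ 2 = t at *
  have ht : t = z⁻¹ * z'⁻¹ := by field_simp; linear_combination hkk
  subst ht
  field_simp
  ring

variable [CharZero K]

lemma IsPrimitiveRoot.qWSum_eq_zero (h : IsPrimitiveRoot ζ d) (hd : 1 < d) {N : ℕ} (hdN : d ∣ N)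
    (α m : ℕ) : qWSum ζ N α m = 0 := by
  have hζN : ζ ^ N = 1 := (h.pow_eq_one_iff_dvd N).mpr hdN
  let g (k : ℕ) : K[X] := C (qWeight ζ N k) * (qWPoly ζ N α k * qWPoly ζ N α (k + 1)) ^ m
  have hg {k : ℕ} (hk : d ∣ k ∨ d ∣ k + 1 ∨ d ∣ k + 2) : g k = 0 := by
    have : qWeight ζ N k = 0 := by
      rcases hk with hk | hk | hk
      · simp [qWeight, h.qInt_eq_zero hd hk]
      · simp [qWeight, h.qInt_eq_zero hd (show d ∣ 2 * k + 2 from hk.mul_left 2)]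
      · simp [qWeight, h.qInt_eq_zero hd hk]
    simp [g, this]
  have hanti (a b b' : ℕ) (hbb : b + b' + 2 = d) (hN : d * a + d ≤ N) :
      g (d * a + b') = -g (d * a + b) := by
    have hbdry (b b' : ℕ) (hbb : b + b' + 2 = d) (hb : b = 0) :
        g (d * a + b) = 0 ∧ g (d * a + b') = 0 := by
      refine ⟨hg (.inl ?_), hg (.inr (.inr ?_))⟩
      · simp [hb]
      · rw [add_assoc, show b' + 2 = d by omega, Nat.dvd_add_self_right]
        exact dvd_mul_right d a
    rcases Nat.eq_zero_or_pos b with hb | hb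
    · obtain ⟨h1, h2⟩ := hbdry b b' hbb hb
      simp [h1, h2]
    rcases Nat.eq_zero_or_pos b' with hb' | hb'
    · obtain ⟨h1, h2⟩ := hbdry b' b (by omega) hb'
      simp [h1, h2]
    have h1 := h.qWPoly_reflect (b := b) (b' := b' + 1) α hb (by omega) (by omega) hN
    have h2 := h.qWPoly_reflect (b := b + 1) (b' := b') α (by omega) hb' (by omega) hN
    have h3 : qWeight ζ N (d * a + b') = -qWeight ζ N (d * a + b) := by
      refine qWeight_reflect (h.ne_one hd) hζN (by omega) (by omega) ?_
      rw [show d * a + b + (d * a + b') + 2 = d * (2 * a + 1) by rw [← hbb]; ring, pow_mul,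
        h.pow_eq_one, one_pow]
    simp only [g, add_assoc, h1, h2, h3, C_neg]
    ring
  have hblock (a : ℕ) (hN : d * a + d ≤ N) : ∑ b ∈ Finset.range d, g (d * a + b) = 0 := by
    obtain ⟨d', rfl⟩ := Nat.exists_eq_add_of_le' (show 1 ≤ d by omega)
    rw [Finset.sum_range_succ, hg (.inr (.inl ⟨a + 1, by ring⟩)), add_zero, ← self_eq_neg]
    nth_rw 1 [← Finset.sum_range_reflect]
    rw [← Finset.sum_neg_distrib]
    refine Finset.sum_congr rfl fun b hb => hanti a _ _ ?_ hN
    have := Finset.mem_range.mp hb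
    omega
  have hpartial (M : ℕ) (hM : d * M ≤ N) : ∑ k ∈ Finset.range (d * M), g k = 0 := by
    induction M with
    | zero => simp
    | succ M ih =>
      rw [mul_add, mul_one] at hM ⊢
      rw [Finset.sum_range_add, ih (by omega), hblock M hM, add_zero]
  obtain ⟨M, rfl⟩ := hdN
  exact hpartial M le_rfl

end Reflection

/-- An integer polynomial vanishing at all nontrivial `N`-th roots of unity is divisible by
`1 + X + ⋯ + X^(N-1)`, so its value at `1` is divisible by `N`. -/
lemma Polynomial.natCast_dvd_eval_one {N : ℕ} (hN : 0 < N) (p : ℤ[X])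
    (hp : ∀ ζ : ℂ, ζ ^ N = 1 → ζ ≠ 1 → aeval ζ p = 0) : (N : ℤ) ∣ p.eval 1 := by
  have hmonic : (X ^ N - 1 : ℤ[X]).Monic := monic_X_pow_sub_C 1 hN.ne'
  have hprim := Complex.isPrimitiveRoot_exp N hN.ne'
  have hdvd : (X ^ N - 1 : ℤ[X]) ∣ p * (X - 1) := by
    rw [← map_dvd_map (Int.castRingHom ℂ) Int.cast_injective hmonic]
    simp only [Polynomial.map_sub, Polynomial.map_pow, map_X, Polynomial.map_one,
      Polynomial.map_mul]
    rw [X_pow_sub_one_eq_prod hN hprim]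
    refine Finset.prod_dvd_of_coprime
      (fun x _ y _ hxy => pairwise_coprime_X_sub_C Function.injective_id hxy) fun ζ hζ => ?_
    rw [dvd_iff_isRoot, IsRoot.def]
    rw [mem_nthRootsFinset hN] at hζ
    by_cases h1 : ζ = 1
    · simp [h1]
    · have := hp ζ hζ h1
      rw [aeval_def, eval₂_eq_eval_map] at this
      rw [eval_mul]
      exact mul_eq_zero_of_left this _
  obtain ⟨r, hr⟩ := hdvd
  rw [← geom_sum_mul] at hr
  have hX : (X - 1 : ℤ[X]) ≠ 0 := X_sub_C_ne_zero 1
  have : p = (∑ i ∈ Finset.range N, X ^ i) * r :=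
    mul_right_cancel₀ hX (by rw [hr]; ring)
  refine ⟨r.eval 1, ?_⟩
  rw [this, eval_mul, eval_geom_sum]
  simp

lemma dvd_coeff_qWSum_one {N : ℕ} (hN : 0 < N) (α m i : ℕ) :
    (N : ℤ) ∣ (qWSum (1 : ℤ) N α m).coeff i := by
  have hmap {S : Type} [CommRing S] (f : ℤ[X] →+* S) :
      f ((qWSum (X : ℤ[X]) N α m).coeff i) = (qWSum (f X) N α m).coeff i := by
    rw [← map_qWSum, coeff_map]
  have h1 := hmap (evalRingHom 1)
  rw [coe_evalRingHom, eval_X] at h1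
  rw [← h1]
  refine Polynomial.natCast_dvd_eval_one hN _ fun ζ hζ hζ1 => ?_
  have h2 := hmap (aeval (R := ℤ) ζ).toRingHom
  have hd : 1 < orderOf ζ := by
    have h3 : 0 < orderOf ζ := orderOf_pos_iff.mpr (isOfFinOrder_iff_pow_eq_one.mpr ⟨N, hN, hζ⟩)
    have h4 : orderOf ζ ≠ 1 := mt orderOf_eq_one_iff.mp hζ1
    omega
  simp only [AlgHom.toRingHom_eq_coe, RingHom.coe_coe, aeval_X] at h2
  rw [h2, (IsPrimitiveRoot.orderOf ζ).qWSum_eq_zero hd (orderOf_dvd_of_pow_eq_one hζ), coeff_zero]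

lemma dvd_coeff_two_mul_sum_range {α N : ℕ} (hα : 1 ≤ α) (hN : 0 < N) (m i : ℕ) :
    (N : ℤ) ∣ (2 * ∑ k ∈ Finset.range N, ((k : ℤ) * ((k : ℤ) + 1) * ((k : ℤ) + 2)) •
      (wPoly α k * wPoly α (k + 1)) ^ m).coeff i := by
  suffices h : 2 * ∑ k ∈ Finset.range N, ((k : ℤ) * ((k : ℤ) + 1) * ((k : ℤ) + 2)) •
      (wPoly α k * wPoly α (k + 1)) ^ m = qWSum (1 : ℤ) N α m from
    h ▸ dvd_coeff_qWSum_one hN α m i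
  rw [qWSum, Finset.mul_sum]
  refine Finset.sum_congr rfl fun k hk => ?_
  have hk := Finset.mem_range.mp hk
  rcases Nat.eq_zero_or_pos k with rfl | hk0
  · simp [qWeight]
  rw [qWPoly_one hα hk0 hk.le, qWPoly_one hα (by omega) hk, smul_eq_C_mul, ← mul_assoc]
  congr 1
  simp [qWeight]
  ring

/-- For all positive integers `α, m, n, r`, `n(n+1)(n+2)/gcd(2,n)` divides every coefficient of
`2·∑_{k=1}^{n} k(k+1)(k+2) (w_k^{(α)}(x) w_{k+1}^{(α)}(x))^m`, i.e.
`2(2,n)/(n(n+1)(n+2))` times this sum lies in `ℤ[x]`. -/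
theorem coeff_dvd_two_mul_sum (α m n r : ℕ) (hα : 1 ≤ α) (hm : 1 ≤ m) (hn : 1 ≤ n) (hr : 1 ≤ r) :
    ∀ i : ℕ, ((n * (n + 1) * (n + 2) / Nat.gcd 2 n : ℕ) : ℤ) ∣
      (2 * ∑ k ∈ Finset.Icc 1 n,
          ((k : ℤ) * ((k : ℤ) + 1) * ((k : ℤ) + 2)) • (wPoly α k * wPoly α (k + 1)) ^ m).coeff i := by
  intro i
  let t (k : ℕ) : ℤ[X] := ((k : ℤ) * ((k : ℤ) + 1) * ((k : ℤ) + 2)) •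
    (wPoly α k * wPoly α (k + 1)) ^ m
  have hsum : ∑ k ∈ Finset.Icc 1 n, t k = ∑ k ∈ Finset.range (n + 1), t k := by
    refine Finset.sum_subset (fun k hk => ?_) fun k hk hk' => ?_
    · exact Finset.mem_range.mpr (Nat.lt_succ_of_le (Finset.mem_Icc.mp hk).2)
    · rw [Finset.mem_range] at hk
      rw [Finset.mem_Icc] at hk'
      simp [t, show k = 0 by omega]
  change ((n * (n + 1) * (n + 2) / Nat.gcd 2 n : ℕ) : ℤ) ∣
    (2 * ∑ k ∈ Finset.Icc 1 n, t k).coeff i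
  have hterm (N k : ℕ) (h : (N : ℤ) ∣ (k : ℤ) * ((k : ℤ) + 1) * ((k : ℤ) + 2)) :
      (N : ℤ) ∣ (2 * t k).coeff i := by
    rw [two_mul, coeff_add, coeff_smul, smul_eq_mul]
    exact dvd_add (h.mul_right _) (h.mul_right _)
  have h1 : ((n + 1 : ℕ) : ℤ) ∣ (2 * ∑ k ∈ Finset.range (n + 1), t k).coeff i :=
    dvd_coeff_two_mul_sum_range hα (by omega) m i
  have h0 : (n : ℤ) ∣ (2 * ∑ k ∈ Finset.range (n + 1), t k).coeff i := by
    rw [Finset.sum_range_succ, mul_add, coeff_add]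
    exact dvd_add (dvd_coeff_two_mul_sum_range hα (by omega) m i)
      (hterm n n ⟨((n : ℤ) + 1) * ((n : ℤ) + 2), by ring⟩)
  have h2 : ((n + 2 : ℕ) : ℤ) ∣ (2 * ∑ k ∈ Finset.range (n + 1), t k).coeff i := by
    have h := dvd_coeff_two_mul_sum_range hα (show 0 < n + 2 by omega) m i
    rw [Finset.sum_range_succ, mul_add, coeff_add] at h
    refine (dvd_add_left (hterm (n + 2) (n + 1) ⟨((n : ℤ) + 1) * ((n : ℤ) + 3), ?_⟩)).mp h
    push_cast
    ring
  rw [hsum]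
  generalize (2 * ∑ k ∈ Finset.range (n + 1), t k).coeff i = z at *
  rw [Int.natCast_dvd] at *
  have h02 : n * (n + 2) / Nat.gcd 2 n ∣ z.natAbs := by
    have := Nat.lcm_dvd h0 h2
    rwa [Nat.lcm, Nat.gcd_self_add_right, Nat.gcd_comm n 2] at this
  have hc : (n * (n + 2)).Coprime (n + 1) := by
    simp [Nat.coprime_mul_iff_left, show n + 2 = n + 1 + 1 by rfl]
  have hg : Nat.gcd 2 n ∣ n * (n + 2) := (Nat.gcd_dvd_right 2 n).mul_right _
  rw [show n * (n + 1) * (n + 2) = n * (n + 2) * (n + 1) by ring, Nat.mul_div_right_comm hg]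
  exact (hc.coprime_dvd_left (Nat.div_dvd_of_dvd hg)).mul_dvd_of_dvd_of_dvd h02 h1
end
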